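/- Let a ≤ b, let ψ : ℝ → ℝ be continuous with ψ(r) > 0 for all r, and let y : ℝ → ℝ be differentiable on [a, b] with y'(t) ≤ ψ(y(t)) for all t ∈ [a, b]. Let C₁ ≤ C₂ and δ > 0 satisfy y(a) ≤ C₁ and ∫_{C₁}^{C₂} dr/ψ(r) ≥ δ. Then y(t) ≤ C₂ for every t ∈ [a, min(b, a + δ)]. -/

import Mathlib

open intervalIntegral Set

/-!
Write `Φ s = ∫_{C₁}^s dr / ψ r`. Where `y` takes values in `[C₁, C₂]`, the function `Φ ∘ y`
has slope at most `1`, so crossing from level `C₁` to level `C₂` takes time at least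
`Φ C₂ ≥ δ`. If `y` exceeded `C₂` at a time `t ≤ a + δ`, such a crossing would take place within
`[a, t]` and end strictly before `t`, hence last less than `δ`.
-/

section Crossing

variable {α β : Type*} [ConditionallyCompleteLinearOrder α] [TopologicalSpace α] [OrderTopology α]
  [DenselyOrdered α] [LinearOrder β] [TopologicalSpace β] [OrderClosedTopology β]
  {f : α → β} {a b : α} {c c₁ c₂ : β}

theorem exists_first_eq_of_continuousOn (hab : a ≤ b) (hf : ContinuousOn f (Icc a b))
    (hc : c ∈ Icc (f a) (f b)) : ∃ t ∈ Icc a b, f t = c ∧ ∀ s ∈ Icc a t, f s ≤ c := by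
  have hcompact : IsCompact (Icc a b ∩ f ⁻¹' {c}) :=
    isCompact_Icc.of_isClosed_subset (hf.preimage_isClosed_of_isClosed isClosed_Icc
      isClosed_singleton) inter_subset_left
  obtain ⟨t, ⟨ht, hft⟩, hleast⟩ := hcompact.exists_isLeast (intermediate_value_Icc hab hf hc)
  refine ⟨t, ht, hft, fun s hs => le_of_not_gt fun hcs => ?_⟩
  obtain ⟨r, hr, hfr⟩ := intermediate_value_Icc hs.1
    (hf.mono (Icc_subset_Icc_right (hs.2.trans ht.2))) ⟨hc.1, hcs.le⟩
  have htr : t ≤ r := hleast ⟨⟨hr.1, hr.2.trans (hs.2.trans ht.2)⟩, hfr⟩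
  have hst : s = t := hs.2.antisymm (htr.trans hr.2)
  exact hcs.ne' (hst ▸ hft)

theorem exists_last_eq_of_continuousOn (hab : a ≤ b) (hf : ContinuousOn f (Icc a b))
    (hc : c ∈ Icc (f a) (f b)) : ∃ t ∈ Icc a b, f t = c ∧ ∀ s ∈ Icc t b, c ≤ f s := by
  obtain ⟨t, ht, hft, hle⟩ := exists_first_eq_of_continuousOn (α := αᵒᵈ) (β := βᵒᵈ)
    (f := OrderDual.toDual ∘ f ∘ OrderDual.ofDual) (a := OrderDual.toDual b)
    (b := OrderDual.toDual a) (c := OrderDual.toDual c) hab (by rw [Icc_toDual]; exact hf) hc.symm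
  exact ⟨t, ht.symm, hft, fun s hs => hle s hs.symm⟩

theorem exists_crossing_of_continuousOn (hab : a ≤ b) (hf : ContinuousOn f (Icc a b))
    (ha : f a ≤ c₁) (hc : c₁ ≤ c₂) (hb : c₂ ≤ f b) :
    ∃ t₁ t₂, a ≤ t₁ ∧ t₁ ≤ t₂ ∧ t₂ ≤ b ∧ f t₁ = c₁ ∧ f t₂ = c₂ ∧
      MapsTo f (Icc t₁ t₂) (Icc c₁ c₂) := by
  obtain ⟨t₂, ht₂, hft₂, hle⟩ := exists_first_eq_of_continuousOn hab hf ⟨ha.trans hc, hb⟩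
  obtain ⟨t₁, ht₁, hft₁, hge⟩ := exists_last_eq_of_continuousOn ht₂.1
    (hf.mono (Icc_subset_Icc_right ht₂.2)) ⟨ha, hc.trans_eq hft₂.symm⟩
  exact ⟨t₁, t₂, ht₁.1, ht₁.2, ht₂.2, hft₁, hft₂,
    fun s hs => ⟨hge s hs, hle s ⟨ht₁.1.trans hs.1, hs.2⟩⟩⟩

end Crossing

theorem hasDerivWithinAt_integral_of_continuousOn_Icc {E : Type*} [NormedAddCommGroup E]
    [NormedSpace ℝ E] [CompleteSpace E] {g : ℝ → E} {c₁ c₂ c s : ℝ}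
    (hg : ContinuousOn g (Icc c₁ c₂)) (hc : c ∈ Icc c₁ c₂) (hs : s ∈ Icc c₁ c₂) :
    HasDerivWithinAt (fun u => ∫ r in c..u, g r) (g s) (Icc c₁ c₂) s := by
  have : Fact (s ∈ Icc c₁ c₂) := ⟨hs⟩
  exact integral_hasDerivWithinAt_right (hg.mono (uIcc_subset_Icc hc hs)).intervalIntegrable
    (hg.stronglyMeasurableAtFilter_nhdsWithin measurableSet_Icc s) (hg s hs)

theorem integral_le_integral_of_comp_mul_deriv_le {g φ y y' : ℝ → ℝ} {t₁ t₂ c₁ c₂ : ℝ}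
    (ht : t₁ ≤ t₂) (hg : ContinuousOn g (Icc c₁ c₂)) (hyc : ContinuousOn y (Icc t₁ t₂))
    (hy : ∀ t ∈ Ioo t₁ t₂, HasDerivWithinAt y (y' t) (Ioi t) t)
    (hmaps : MapsTo y (Icc t₁ t₂) (Icc c₁ c₂))
    (hφ : MeasureTheory.IntegrableOn φ (Icc t₁ t₂))
    (hle : ∀ t ∈ Ioo t₁ t₂, g (y t) * y' t ≤ φ t) :
    ∫ r in y t₁..y t₂, g r ≤ ∫ t in t₁..t₂, φ t := by
  have hG : ∀ s ∈ Icc c₁ c₂,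
      HasDerivWithinAt (fun u => ∫ r in y t₁..u, g r) (g s) (Icc c₁ c₂) s :=
    fun s hs => hasDerivWithinAt_integral_of_continuousOn_Icc hg (hmaps (left_mem_Icc.2 ht)) hs
  have hGyc : ContinuousOn (fun t => ∫ r in y t₁..y t, g r) (Icc t₁ t₂) :=
    ContinuousOn.comp (fun s hs => (hG s hs).continuousWithinAt) hyc hmaps
  have hGy : ∀ t ∈ Ioo t₁ t₂,
      HasDerivWithinAt (fun u => ∫ r in y t₁..y u, g r) (g (y t) * y' t) (Ioi t) t := by
    intro t ht'
    have hmaps' : MapsTo y (Ioc t t₂) (Icc c₁ c₂) :=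
      hmaps.mono_left fun u hu => ⟨ht'.1.le.trans hu.1.le, hu.2⟩
    exact ((hG (y t) (hmaps (Ioo_subset_Icc_self ht'))).comp t
      ((hy t ht').mono Ioc_subset_Ioi_self) hmaps').mono_of_mem_nhdsWithin
        (Ioc_mem_nhdsGT ht'.2)
  simpa only [integral_same, sub_zero] using
    sub_le_integral_of_hasDeriv_right_of_le ht hGyc hGy hφ hle

theorem integral_one_div_le_sub_of_deriv_right_le {ψ y y' : ℝ → ℝ} {t₁ t₂ c₁ c₂ : ℝ}
    (ht : t₁ ≤ t₂) (hψc : ContinuousOn ψ (Icc c₁ c₂)) (hψpos : ∀ r ∈ Icc c₁ c₂, 0 < ψ r)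
    (hyc : ContinuousOn y (Icc t₁ t₂))
    (hy : ∀ t ∈ Ioo t₁ t₂, HasDerivWithinAt y (y' t) (Ioi t) t)
    (hmaps : MapsTo y (Icc t₁ t₂) (Icc c₁ c₂))
    (hy' : ∀ t ∈ Ioo t₁ t₂, y' t ≤ ψ (y t)) :
    ∫ r in y t₁..y t₂, 1 / ψ r ≤ t₂ - t₁ := by
  have hslope : ∀ t ∈ Ioo t₁ t₂, 1 / ψ (y t) * y' t ≤ 1 := by
    intro t ht'
    rw [one_div_mul_eq_div, div_le_one (hψpos _ (hmaps (Ioo_subset_Icc_self ht')))]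
    exact hy' t ht'
  have hψinv : ContinuousOn (fun r => 1 / ψ r) (Icc c₁ c₂) :=
    continuousOn_const.div hψc fun r hr => (hψpos r hr).ne'
  simpa only [integral_const, smul_eq_mul, mul_one] using
    integral_le_integral_of_comp_mul_deriv_le ht hψinv hyc hy hmaps
      continuousOn_const.integrableOn_Icc hslope

theorem local_regularization_bound_general {ψ y y' : ℝ → ℝ} {a b C₁ C₂ δ : ℝ}
    (hψc : ContinuousOn ψ (Icc C₁ C₂)) (hψpos : ∀ r ∈ Icc C₁ C₂, 0 < ψ r)
    (hyc : ContinuousOn y (Icc a b))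
    (hy : ∀ t ∈ Ioo a b, HasDerivWithinAt y (y' t) (Ioi t) t)
    (hy' : ∀ t ∈ Ioo a b, y t ∈ Icc C₁ C₂ → y' t ≤ ψ (y t))
    (hC : C₁ ≤ C₂) (hya : y a ≤ C₁) (hint : δ ≤ ∫ r in C₁..C₂, 1 / ψ r) :
    ∀ t ∈ Icc a (min b (a + δ)), y t ≤ C₂ := by
  intro t ht
  obtain ⟨htb, htδ⟩ := le_min_iff.mp ht.2
  by_contra! hexceeds
  obtain ⟨t₁, t₂, hat₁, ht₁₂, ht₂t, hyt₁, hyt₂, hmaps⟩ := exists_crossing_of_continuousOn ht.1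
    (hyc.mono (Icc_subset_Icc_right htb)) hya hC hexceeds.le
  have hIoo : Ioo t₁ t₂ ⊆ Ioo a b := Ioo_subset_Ioo hat₁ (ht₂t.trans htb)
  have hIcc : Icc t₁ t₂ ⊆ Icc a b := Icc_subset_Icc hat₁ (ht₂t.trans htb)
  have hduration : ∫ r in C₁..C₂, 1 / ψ r ≤ t₂ - t₁ := by
    simpa only [hyt₁, hyt₂] using integral_one_div_le_sub_of_deriv_right_le ht₁₂ hψc hψpos
      (hyc.mono hIcc) (fun s hs => hy s (hIoo hs)) hmaps
      (fun s hs => hy' s (hIoo hs) (hmaps (Ioo_subset_Icc_self hs)))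
  have ht₂_lt : t₂ < t := ht₂t.lt_of_ne fun h => hexceeds.ne' (h ▸ hyt₂)
  linarith

/-- Quantitative local regularization: if `ψ` is continuous and strictly positive, `y` is
differentiable on `[a, b]` with `y' ≤ ψ(y)` there, `y(a) ≤ C₁ ≤ C₂`, and
`∫_{C₁}^{C₂} dr/ψ(r) ≥ δ > 0`, then `y(t) ≤ C₂` on `[a, min(b, a + δ)]`. -/
theorem local_regularization_bound (a b : ℝ) (hab : a ≤ b)
    (ψ : ℝ → ℝ) (hψc : Continuous ψ) (hψpos : ∀ r : ℝ, 0 < ψ r)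
    (y y' : ℝ → ℝ) (hy : ∀ t ∈ Icc a b, HasDerivAt y (y' t) t)
    (hy' : ∀ t ∈ Icc a b, y' t ≤ ψ (y t))
    (C₁ C₂ δ : ℝ) (hC : C₁ ≤ C₂) (hδ : 0 < δ)
    (hya : y a ≤ C₁) (hint : δ ≤ ∫ r in C₁..C₂, 1 / ψ r) :
    ∀ t ∈ Icc a (min b (a + δ)), y t ≤ C₂ := by
  exact local_regularization_bound_general hψc.continuousOn (fun r _ => hψpos r)
    (fun t ht => (hy t ht).continuousAt.continuousWithinAt)
    (fun t ht => (hy t (Ioo_subset_Icc_self ht)).hasDerivWithinAt)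
    (fun t ht _ => hy' t (Ioo_subset_Icc_self ht)) hC hya hint
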